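/- Variance upper bound for the relative error influence function (Proposition on confidence interval width): if additionally |μ₀(x)| ≤ M, |μ₁(x)| ≤ M, and |τ̂₁(x)| ≤ M_τ, |τ̂₂(x)| ≤ M_τ for all x, then Var( τ̂₁(X)² − τ̂₂(X)² − 2(τ̂₁(X) − τ̂₂(X))·Γ ) ≤ (2M_τ + 4M/η + 4M)² · E[(τ̂₁(X) − τ̂₂(X))²]. In particular, there is a constant C > 0 depending only on (M, M_τ, η) such that the variance is at most C·E[(τ̂₁(X) − τ̂₂(X))²]. -/

import Mathlib

open MeasureTheory ProbabilityTheory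

/-!
The influence function factors as `(τ̂₁ - τ̂₂) * (τ̂₁ + τ̂₂ - 2Γ)`. In `Γ` the two residuals,
each at most `2M/η` after inverse-probability weighting, enter with weights `W` and `1 - W`, so
together they contribute at most `2M/η` rather than `4M/η`, and the second factor is bounded by
`2Mτ + 2(2M/η + 2M)`. The variance is at most the second moment.
-/

section OrderedRing

variable {R : Type*} [CommRing R] [LinearOrder R] [IsStrictOrderedRing R]

theorem abs_mul_sub_one_sub_mul_le {w a b K : R} (hw : w ∈ Set.Icc 0 1)
    (ha : |a| ≤ K) (hb : |b| ≤ K) : |w * a - (1 - w) * b| ≤ K :=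
  have hw' : 0 ≤ 1 - w := sub_nonneg.2 hw.2
  calc |w * a - (1 - w) * b|
    _ ≤ |w * a| + |(1 - w) * b| := abs_sub _ _
    _ = w * |a| + (1 - w) * |b| := by rw [abs_mul, abs_mul, abs_of_nonneg hw.1, abs_of_nonneg hw']
    _ ≤ w * K + (1 - w) * K :=
      add_le_add (mul_le_mul_of_nonneg_left ha hw.1) (mul_le_mul_of_nonneg_left hb hw')
    _ = K := by ring

theorem abs_sub_le_two_mul {a b K : R} (ha : |a| ≤ K) (hb : |b| ≤ K) : |a - b| ≤ 2 * K :=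
  (abs_sub a b).trans (by linarith)

theorem abs_sq_sub_sq_sub_two_mul_le {a b g K G : R}
    (ha : |a| ≤ K) (hb : |b| ≤ K) (hg : |g| ≤ G) :
    |a ^ 2 - b ^ 2 - 2 * (a - b) * g| ≤ (2 * K + 2 * G) * |a - b| := by
  have hfactor : a ^ 2 - b ^ 2 - 2 * (a - b) * g = ((a - g) + (b - g)) * (a - b) := by ring
  rw [hfactor, abs_mul]
  gcongr
  linarith [abs_add_le (a - g) (b - g), abs_sub a g, abs_sub b g]

end OrderedRing

theorem abs_div_le_div {𝕜 : Type*} [Field 𝕜] [LinearOrder 𝕜] [IsStrictOrderedRing 𝕜]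
    {r p R η : 𝕜} (hη : 0 < η) (hp : η ≤ p) (hr : |r| ≤ R) :
    |r / p| ≤ R / η := by
  rw [abs_div, abs_of_pos (hη.trans_le hp)]
  exact div_le_div₀ ((abs_nonneg r).trans hr) hr hη hp

/-- The augmented inverse-propensity-weighted (AIPW) pseudo-outcome `Γ` of a single observation, as
a function of the treatment `w`, the outcome `y`, and the values at its covariate of the propensity
score (`p`) and of the outcome regressions for control (`m₀`) and treated (`m₁`) units. -/
noncomputable def aipwPseudoOutcome (w y p m₀ m₁ : ℝ) : ℝ :=
  w * (y - m₁) / p + m₁ - (1 - w) * (y - m₀) / (1 - p) - m₀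

theorem abs_aipwPseudoOutcome_le {w y p m₀ m₁ η R D : ℝ} (hw : w ∈ Set.Icc 0 1)
    (hη : 0 < η) (hp : p ∈ Set.Icc η (1 - η))
    (h₀ : |y - m₀| ≤ R) (h₁ : |y - m₁| ≤ R) (hm : |m₁ - m₀| ≤ D) :
    |aipwPseudoOutcome w y p m₀ m₁| ≤ R / η + D := by
  have hr₁ : |(y - m₁) / p| ≤ R / η := abs_div_le_div hη hp.1 h₁
  have hr₀ : |(y - m₀) / (1 - p)| ≤ R / η := abs_div_le_div hη (le_sub_comm.1 hp.2) h₀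
  calc |aipwPseudoOutcome w y p m₀ m₁|
    _ = |(w * ((y - m₁) / p) - (1 - w) * ((y - m₀) / (1 - p))) + (m₁ - m₀)| := by
      rw [aipwPseudoOutcome]; ring_nf
    _ ≤ |w * ((y - m₁) / p) - (1 - w) * ((y - m₀) / (1 - p))| + |m₁ - m₀| := abs_add_le _ _
    _ ≤ R / η + D := add_le_add (abs_mul_sub_one_sub_mul_le hw hr₁ hr₀) hm

section Probability

variable {Ω : Type*} [MeasurableSpace Ω] {P : Measure Ω} [IsProbabilityMeasure P]

theorem variance_le_sq_mul_integral_sq {f g : Ω → ℝ} {K : ℝ} (hf : AEStronglyMeasurable f P)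
    (hg : MemLp g 2 P) (hfg : ∀ᵐ ω ∂P, |f ω| ≤ K * |g ω|) :
    variance f P ≤ K ^ 2 * ∫ ω, g ω ^ 2 ∂P := by
  calc variance f P
    _ ≤ ∫ ω, f ω ^ 2 ∂P := variance_le_expectation_sq hf
    _ ≤ ∫ ω, K ^ 2 * g ω ^ 2 ∂P := by
      refine integral_mono_of_nonneg (.of_forall fun ω => sq_nonneg (f ω))
        (hg.integrable_sq.const_mul _) (hfg.mono fun ω hω => ?_)
      calc f ω ^ 2
        _ = |f ω| ^ 2 := (sq_abs _).symm
        _ ≤ (K * |g ω|) ^ 2 := pow_le_pow_left₀ (abs_nonneg _) hω 2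
        _ = K ^ 2 * g ω ^ 2 := by rw [mul_pow, sq_abs]
    _ = K ^ 2 * ∫ ω, g ω ^ 2 ∂P := integral_const_mul _ _

theorem variance_sq_sub_sq_sub_two_mul_le {A B Γ : Ω → ℝ} {K G : ℝ}
    (hA : AEMeasurable A P) (hB : AEMeasurable B P) (hΓ : AEMeasurable Γ P)
    (hAb : ∀ᵐ ω ∂P, |A ω| ≤ K) (hBb : ∀ᵐ ω ∂P, |B ω| ≤ K) (hΓb : ∀ᵐ ω ∂P, |Γ ω| ≤ G) :
    variance (fun ω => A ω ^ 2 - B ω ^ 2 - 2 * (A ω - B ω) * Γ ω) P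
      ≤ (2 * K + 2 * G) ^ 2 * ∫ ω, (A ω - B ω) ^ 2 ∂P := by
  have hdiff : MemLp (fun ω => A ω - B ω) 2 P :=
    (MemLp.of_bound hA.aestronglyMeasurable K hAb).sub (.of_bound hB.aestronglyMeasurable K hBb)
  refine variance_le_sq_mul_integral_sq (by fun_prop) hdiff ?_
  filter_upwards [hAb, hBb, hΓb] with ω ha hb hg
  exact abs_sq_sub_sq_sub_two_mul_le ha hb hg

theorem relative_error_variance_upper_bound_general {W Y p m₀ m₁ A B : Ω → ℝ} {M η K : ℝ}
    (hW : AEMeasurable W P) (hY : AEMeasurable Y P) (hp : AEMeasurable p P)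
    (hm₀ : AEMeasurable m₀ P) (hm₁ : AEMeasurable m₁ P)
    (hA : AEMeasurable A P) (hB : AEMeasurable B P)
    (hWb : ∀ᵐ ω ∂P, W ω ∈ Set.Icc 0 1) (hYb : ∀ᵐ ω ∂P, |Y ω| ≤ M)
    (hη : 0 < η) (hpb : ∀ᵐ ω ∂P, p ω ∈ Set.Icc η (1 - η))
    (hm₀b : ∀ᵐ ω ∂P, |m₀ ω| ≤ M) (hm₁b : ∀ᵐ ω ∂P, |m₁ ω| ≤ M)
    (hAb : ∀ᵐ ω ∂P, |A ω| ≤ K) (hBb : ∀ᵐ ω ∂P, |B ω| ≤ K) :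
    variance (fun ω => A ω ^ 2 - B ω ^ 2
        - 2 * (A ω - B ω) * aipwPseudoOutcome (W ω) (Y ω) (p ω) (m₀ ω) (m₁ ω)) P
      ≤ (2 * K + 4 * M / η + 4 * M) ^ 2 * ∫ ω, (A ω - B ω) ^ 2 ∂P := by
  have hΓ : AEMeasurable (fun ω => aipwPseudoOutcome (W ω) (Y ω) (p ω) (m₀ ω) (m₁ ω)) P := by
    unfold aipwPseudoOutcome
    fun_prop
  have hΓb : ∀ᵐ ω ∂P, |aipwPseudoOutcome (W ω) (Y ω) (p ω) (m₀ ω) (m₁ ω)|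
      ≤ 2 * M / η + 2 * M := by
    filter_upwards [hWb, hYb, hpb, hm₀b, hm₁b] with ω hw hy hp h₀ h₁
    exact abs_aipwPseudoOutcome_le hw hη hp (abs_sub_le_two_mul hy h₀) (abs_sub_le_two_mul hy h₁)
      (abs_sub_le_two_mul h₁ h₀)
  have hconst : 2 * K + 4 * M / η + 4 * M = 2 * K + 2 * (2 * M / η + 2 * M) := by ring
  rw [hconst]
  exact variance_sq_sub_sq_sub_two_mul_le hA hB hΓ hAb hBb hΓb

end Probability

/-- Variance upper bound for the relative error influence function:
`Var(τ̂₁(X)² − τ̂₂(X)² − 2(τ̂₁(X) − τ̂₂(X))·Γ) ≤ (2Mτ + 4M/η + 4M)² · E[(τ̂₁(X) − τ̂₂(X))²]`. -/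
theorem relative_error_variance_upper_bound
    {Ω 𝒳 : Type*} [MeasurableSpace Ω] [m𝒳 : MeasurableSpace 𝒳]
    (P : Measure Ω) [IsProbabilityMeasure P]
    (X : Ω → 𝒳) (W Y : Ω → ℝ)
    (hX : Measurable X) (hW : Measurable W) (hY : Measurable Y)
    (hW01 : ∀ᵐ ω ∂P, W ω = 0 ∨ W ω = 1)
    (M : ℝ) (hM : 0 < M) (hYb : ∀ᵐ ω ∂P, |Y ω| ≤ M)
    (e μ₀ μ₁ : 𝒳 → ℝ)
    (he : Measurable e) (hμ₀ : Measurable μ₀) (hμ₁ : Measurable μ₁)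
    (hμ₀b : ∀ x, |μ₀ x| ≤ M) (hμ₁b : ∀ x, |μ₁ x| ≤ M)
    (η : ℝ) (hη₀ : 0 < η) (hη₁ : η < 1/2)
    (heb : ∀ x, η ≤ e x ∧ e x ≤ 1 - η)
    (hce : P[W | m𝒳.comap X] =ᵐ[P] fun ω => e (X ω))
    (hc1 : P[fun ω => W ω * Y ω | m𝒳.comap X] =ᵐ[P] fun ω => e (X ω) * μ₁ (X ω))
    (hc0 : P[fun ω => (1 - W ω) * Y ω | m𝒳.comap X]
        =ᵐ[P] fun ω => (1 - e (X ω)) * μ₀ (X ω))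
    (τhat₁ τhat₂ : 𝒳 → ℝ) (Mτ : ℝ)
    (hτ₁ : Measurable τhat₁) (hτ₂ : Measurable τhat₂)
    (hτ₁b : ∀ x, |τhat₁ x| ≤ Mτ) (hτ₂b : ∀ x, |τhat₂ x| ≤ Mτ) :
    variance (fun ω => τhat₁ (X ω) ^ 2 - τhat₂ (X ω) ^ 2
        - 2 * (τhat₁ (X ω) - τhat₂ (X ω))
          * (W ω * (Y ω - μ₁ (X ω)) / e (X ω) + μ₁ (X ω)
            - (1 - W ω) * (Y ω - μ₀ (X ω)) / (1 - e (X ω)) - μ₀ (X ω))) P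
      ≤ (2 * Mτ + 4 * M / η + 4 * M) ^ 2 * ∫ ω, (τhat₁ (X ω) - τhat₂ (X ω)) ^ 2 ∂P := by
  have hWb : ∀ᵐ ω ∂P, W ω ∈ Set.Icc 0 1 := hW01.mono fun ω hω => by
    rcases hω with h | h <;> simp [h]
  exact relative_error_variance_upper_bound_general hW.aemeasurable hY.aemeasurable
    (he.comp hX).aemeasurable (hμ₀.comp hX).aemeasurable (hμ₁.comp hX).aemeasurable
    (hτ₁.comp hX).aemeasurable (hτ₂.comp hX).aemeasurable hWb hYb hη₀
    (.of_forall fun ω => heb (X ω)) (.of_forall fun ω => hμ₀b (X ω))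
    (.of_forall fun ω => hμ₁b (X ω)) (.of_forall fun ω => hτ₁b (X ω))
    (.of_forall fun ω => hτ₂b (X ω))
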